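/- arXiv:2212.01787 — 2 statements merged into one kernel-verified Lean document; each statement's English description precedes it below -/
import Mathlib

section
/- Let L, M, N be sharp quasi-integral commutative monoids and f : N → M, g : N → L local morphisms. Then M ⊔_N L is quasi-integral if and only if for every n ∈ N^gp with f^gp(n) ∈ M^int and -g^gp(n) ∈ L^int, one has f^gp(n) = 0 and g^gp(n) = 0. -/
/-- `η : M →+ G` exhibits the abelian group `G` as the groupification of the
commutative monoid `M`. -/
def IsGroupification {M G : Type*} [AddCommMonoid M] [AddCommGroup G] (η : M →+ G) : Prop :=
  (∀ x : G, ∃ a b : M, x = η a - η b) ∧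
  (∀ a b : M, η a = η b ↔ ∃ k : M, a + k = b + k)

/-- A commutative monoid is sharp if its unit group is trivial. -/
def IsSharp (M : Type*) [AddCommMonoid M] : Prop := ∀ x : M, IsAddUnit x → x = 0

/-- A morphism of monoids is local if the preimage of the unit group is the unit group. -/
def IsLocalMonoidHom {N M : Type*} [AddCommMonoid N] [AddCommMonoid M] (f : N →+ M) : Prop :=
  ∀ n : N, IsAddUnit (f n) → IsAddUnit n

/-- `(P, iM, iL)` is the push-out `M ⊔_N L` of `f : N →+ M` and `g : N →+ L` in the
category of commutative monoids. -/
def IsMonPushout {N M L P : Type*} [AddCommMonoid N] [AddCommMonoid M] [AddCommMonoid L]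
    [AddCommMonoid P] (f : N →+ M) (g : N →+ L) (iM : M →+ P) (iL : L →+ P) : Prop :=
  iM.comp f = iL.comp g ∧
  ∀ (Q : Type*) [AddCommMonoid Q] (jM : M →+ Q) (jL : L →+ Q),
    jM.comp f = jL.comp g → ∃! h : P →+ Q, h.comp iM = jM ∧ h.comp iL = jL

/-- The saturation of a subset `P` of an abelian group `G`:
`P^sat = { x ∈ G | ∃ a ≥ 1, a • x ∈ P }`. -/
def saturationOf {G : Type*} [AddCommGroup G] (P : Set G) : Set G :=
  {x : G | ∃ a : ℕ, 0 < a ∧ a • x ∈ P}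

/-! Let `A` be the submonoid of `P` generated by the images of `M` and `L`.  Every morphism from
`A` to a monoid in `Type` extends uniquely to `P`, `A` is sharp, and by separating points with
characters `(m, l)` vanishes in `P^gp` exactly when its image in `M^gp × L^gp` is
`(f^gp n, -g^gp n)` for some `n`.  Hence the condition on `n` says that `A` is quasi-integral, as it
must be if `P` is.

Conversely, quasi-integrality passes from `A` to `P`.  Let `b + k = k` in `P`.  Since faces of `P`
are determined by their traces on `A`, some `a ∈ A` generates the same face as `b`.  If `a = 0`,
then `b` is a unit, hence trivial because characters of the unit group, extended by `⊤`, are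
determined by their values on `A`.  If `a ≠ 0`, extending the positive cone of `A^gp` to a maximal
total preorder in which `-a` is not positive and applying Hölder's embedding theorem gives
`h : A → [0, ∞]` with `0 < h a < ∞` that agrees where finite with a morphism `t : A → ℝ`.  Both
extend to `P`, and still agree where `h` is finite; there `t b = 0` because `ℝ` is cancellative.
So `h b = 0`, contradicting that `a` is a summand of a multiple of `b`. -/

section QuasiIntegral

variable {M G H : Type*} [AddCommMonoid M] [AddCommGroup G] {η : M →+ G}

/-- A commutative monoid is quasi-integral if `0` is the only element that becomes `0` in the
groupification.  An element `x` does so exactly when `x + k = k` for some `k`, which is how the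
notion is encoded here, without reference to a groupification. -/
def IsQuasiIntegral (M : Type*) [AddCommMonoid M] : Prop := ∀ x k : M, x + k = k → x = 0

namespace IsGroupification

theorem map_eq_zero_iff (hη : IsGroupification η) {x : M} : η x = 0 ↔ ∃ k, x + k = k := by
  simpa using hη.2 x 0

theorem isQuasiIntegral_iff (hη : IsGroupification η) :
    IsQuasiIntegral M ↔ ∀ x, η x = 0 → x = 0 := by
  simp only [IsQuasiIntegral, hη.map_eq_zero_iff, forall_exists_index]

theorem map_eq_map_of_eq [AddCommMonoid H] [IsCancelAdd H] (hη : IsGroupification η)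
    (c : M →+ H) {a b : M} (hab : η a = η b) : c a = c b := by
  obtain ⟨k, hk⟩ := (hη.2 a b).1 hab
  exact add_right_cancel (by rw [← map_add, hk, map_add])

end IsGroupification

theorem isGroupification_of :
    IsGroupification (Algebra.GrothendieckAddGroup.of : M →+ Algebra.GrothendieckAddGroup M) := by
  refine ⟨fun x => ?_, fun a b => ?_⟩
  · induction x using AddLocalization.induction_on with | _ p
    rw [AddLocalization.mk_eq_addMonoidOf_mk'_apply]
    exact ⟨p.1, p.2, eq_sub_of_add_eq (AddSubmonoid.LocalizationMap.mk'_spec _ _ _)⟩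
  · simp only [AddSubmonoid.LocalizationMap.toAddMonoidHom_apply,
      AddSubmonoid.LocalizationMap.eq_iff_exists]
    simp [add_comm]

end QuasiIntegral

section Face

variable {X Q : Type*} [AddCommMonoid X] [AddCommMonoid Q]

/-- A submonoid `F` of a commutative monoid is a face if it contains the summands of each of its
elements. -/
def IsFace (F : AddSubmonoid X) : Prop := ∀ ⦃x y : X⦄, x + y ∈ F → x ∈ F

theorem IsFace.add_mem_iff {F : AddSubmonoid X} (hF : IsFace F) {x y : X} :
    x + y ∈ F ↔ x ∈ F ∧ y ∈ F :=
  ⟨fun h => ⟨hF h, hF (add_comm x y ▸ h)⟩, fun h => F.add_mem h.1 h.2⟩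

theorem isFace_addUnits : IsFace (IsAddUnit.addSubmonoid X) :=
  fun _ _ => isAddUnit_of_add_isAddUnit_left

theorem IsSharp.isFace_bot (hX : IsSharp X) : IsFace (⊥ : AddSubmonoid X) := fun x y h =>
  hX x (isAddUnit_of_add_isAddUnit_left (y := y) (AddSubmonoid.mem_bot.1 h ▸ isAddUnit_zero))

/-- The face generated by a submonoid `S`: the summands of the elements of `S`. -/
def faceClosure (S : AddSubmonoid X) : AddSubmonoid X where
  carrier := {x | ∃ y, x + y ∈ S}
  zero_mem' := ⟨0, by simp⟩
  add_mem' := by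
    rintro x x' ⟨y, hy⟩ ⟨y', hy'⟩
    exact ⟨y + y', by simpa only [add_add_add_comm] using S.add_mem hy hy'⟩

theorem le_faceClosure (S : AddSubmonoid X) : S ≤ faceClosure S := fun _ hx => ⟨0, by simpa⟩

theorem isFace_faceClosure (S : AddSubmonoid X) : IsFace (faceClosure S) :=
  fun x y ⟨z, hz⟩ => ⟨y + z, by rwa [← add_assoc]⟩

theorem IsFace.faceClosure_le {F S : AddSubmonoid X} (hF : IsFace F) (hSF : S ≤ F) :
    faceClosure S ≤ F := fun _ ⟨_, hy⟩ => hF (hSF hy)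

namespace IsFace

open scoped Classical in
/-- The extension of a morphism `χ` defined on a face by the value `⊤` off the face. -/
noncomputable def extendByTop {F : AddSubmonoid X} (hF : IsFace F) (χ : F →+ Q) :
    X →+ WithTop Q where
  toFun x := if hx : x ∈ F then χ ⟨x, hx⟩ else ⊤
  map_zero' := by
    rw [dif_pos F.zero_mem]
    exact congrArg _ (map_zero χ)
  map_add' x y := by
    by_cases hx : x ∈ F <;> by_cases hy : y ∈ F <;>
      simp [hx, hy, hF.add_mem_iff, ← WithTop.coe_add, ← map_add]

variable {F : AddSubmonoid X} (hF : IsFace F) (χ : F →+ Q) {x : X}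

theorem extendByTop_of_mem (hx : x ∈ F) : hF.extendByTop χ x = χ ⟨x, hx⟩ := dif_pos hx

theorem extendByTop_eq_top_iff : hF.extendByTop χ x = ⊤ ↔ x ∉ F := by
  by_cases hx : x ∈ F <;> simp [extendByTop, hx]

theorem extendByTop_zero_eq_zero_iff : hF.extendByTop (0 : F →+ Q) x = 0 ↔ x ∈ F := by
  by_cases hx : x ∈ F <;> simp [extendByTop, hx]

theorem extendByTop_zero_eq_extendByTop_zero_iff {Y : Type*} [AddCommMonoid Y]
    {F' : AddSubmonoid Y} (hF' : IsFace F') {y : Y} :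
    hF.extendByTop (0 : F →+ Q) x = hF'.extendByTop (0 : F' →+ Q) y ↔ (x ∈ F ↔ y ∈ F') := by
  by_cases hx : x ∈ F <;> by_cases hy : y ∈ F' <;> simp [extendByTop, hx, hy]

end IsFace

end Face

section TotalCone

variable {G : Type*} [AddCommGroup G]

/-- The largest subgroup contained in a submonoid `T` of an abelian group. -/
def lineality (T : AddSubmonoid G) : AddSubgroup G where
  carrier := {x | x ∈ T ∧ -x ∈ T}
  zero_mem' := by simp
  add_mem' := fun ⟨hx, hx'⟩ ⟨hy, hy'⟩ =>
    ⟨T.add_mem hx hy, by simpa only [neg_add] using T.add_mem hx' hy'⟩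
  neg_mem' := fun ⟨hx, hx'⟩ => ⟨hx', by simpa using hx⟩

theorem mk_mem_map_mk_lineality_iff {T : AddSubmonoid G} {x : G} :
    (x : G ⧸ lineality T) ∈ T.map (QuotientAddGroup.mk' (lineality T)) ↔ x ∈ T := by
  refine ⟨?_, fun hx => ⟨x, hx, rfl⟩⟩
  rintro ⟨y, hy, hyx⟩
  simpa using T.add_mem hy (QuotientAddGroup.eq.1 hyx).1

/-- The pointed cone that a submonoid `T` induces on the quotient by its lineality subgroup. -/
def quotientCone (T : AddSubmonoid G) : AddGroupCone (G ⧸ lineality T) where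
  __ := T.map (QuotientAddGroup.mk' (lineality T))
  eq_zero_of_mem_of_neg_mem' {a} ha hna := by
    induction a using QuotientAddGroup.induction_on with | _ x
    exact (QuotientAddGroup.eq_zero_iff x).2
      ⟨mk_mem_map_mk_lineality_iff.1 ha, mk_mem_map_mk_lineality_iff.1 hna⟩

theorem mk_mem_quotientCone_iff {T : AddSubmonoid G} {x : G} :
    (x : G ⧸ lineality T) ∈ quotientCone T ↔ x ∈ T :=
  mk_mem_map_mk_lineality_iff

instance quotientCone.hasMemOrNegMem (T : AddSubmonoid G) [HasMemOrNegMem T] :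
    HasMemOrNegMem (quotientCone T) where
  mem_or_neg_mem a := by
    induction a using QuotientAddGroup.induction_on with | _ x
    simpa only [← QuotientAddGroup.mk_neg, mk_mem_quotientCone_iff] using mem_or_neg_mem T x

theorem exists_hom_real_nonneg_iff_mem (T : AddSubmonoid G) [HasMemOrNegMem T]
    (harch : ∀ x y : G, -y ∉ T → ∃ n : ℕ, n • y - x ∈ T) :
    ∃ t : G →+ ℝ, ∀ x, 0 ≤ t x ↔ x ∈ T := by
  classical
  let : LinearOrder (G ⧸ lineality T) := LinearOrder.mkOfAddGroupCone (quotientCone T)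
  have : IsOrderedAddMonoid (G ⧸ lineality T) := IsOrderedAddMonoid.mkOfCone (quotientCone T)
  have nonneg_iff (x : G) : 0 ≤ (x : G ⧸ lineality T) ↔ x ∈ T := by
    change (x : G ⧸ lineality T) - 0 ∈ quotientCone T ↔ x ∈ T
    rw [sub_zero, mk_mem_quotientCone_iff]
  have : Archimedean (G ⧸ lineality T) := ⟨fun a b hb => by
    induction a using QuotientAddGroup.induction_on with | _ x
    induction b using QuotientAddGroup.induction_on with | _ y
    obtain ⟨n, hn⟩ := harch x y fun hy => hb.not_ge (by simpa using (nonneg_iff (-y)).2 hy)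
    exact ⟨n, sub_nonneg.1 ((nonneg_iff _).2 hn)⟩⟩
  obtain ⟨e, he⟩ := Archimedean.exists_orderAddMonoidHom_real_injective (G ⧸ lineality T)
  refine ⟨(e : G ⧸ lineality T →+ ℝ).comp (QuotientAddGroup.mk' _), fun x => ?_⟩
  rw [← nonneg_iff x, ← (e.monotone'.strictMono_of_injective he).le_iff_le]
  simp

end TotalCone

section State

variable {G : Type*} [AddCommGroup G] {K T : AddSubmonoid G} {u x : G}

theorem exists_maximal_neg_notMem (hu : -u ∉ K) :
    ∃ T, K ≤ T ∧ Maximal (fun S : AddSubmonoid G => -u ∉ S) T := by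
  refine zorn_le_nonempty₀ {S : AddSubmonoid G | -u ∉ S} (fun c hc hchain S hS => ?_) K hu
  refine ⟨sSup c, fun h => ?_, fun _ => le_sSup⟩
  obtain ⟨S', hS', hmem⟩ := (AddSubmonoid.mem_sSup_of_directedOn ⟨S, hS⟩ hchain.directedOn).1 h
  exact hc hS' hmem

theorem exists_neg_nsmul_sub_mem_of_maximal
    (hT : Maximal (fun S : AddSubmonoid G => -u ∉ S) T) (hx : x ∉ T) :
    ∃ n : ℕ, -(n • x) - u ∈ T := by
  have hlt : T < T ⊔ AddSubmonoid.multiples x := left_lt_sup.2 fun h =>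
    hx (h (AddSubmonoid.mem_multiples x))
  obtain ⟨y, hy, _, ⟨n, rfl⟩, hyu⟩ := AddSubmonoid.mem_sup.1 (not_not.1 (hT.not_prop_of_gt hlt))
  have hy_eq : -(n • x) - u = y := by rw [sub_eq_add_neg, ← hyu]; abel
  exact ⟨n, hy_eq ▸ hy⟩

theorem hasMemOrNegMem_of_maximal
    (hT : Maximal (fun S : AddSubmonoid G => -u ∉ S) T) (hu : u ∈ T) : HasMemOrNegMem T where
  mem_or_neg_mem x := by
    by_contra! hx
    obtain ⟨n, hn⟩ := exists_neg_nsmul_sub_mem_of_maximal hT hx.1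
    obtain ⟨m, hm⟩ := exists_neg_nsmul_sub_mem_of_maximal hT hx.2
    cases n with
    | zero => exact hT.prop (by simpa using hn)
    | succ j =>
      have hsum : m • (-((j + 1) • x) - u) + (j + 1) • (-(m • -x) - u) + (j + m) • u = -u := by
        module
      exact hT.prop (hsum ▸ T.add_mem (T.add_mem (T.nsmul_mem hn m) (T.nsmul_mem hm (j + 1)))
        (T.nsmul_mem hu (j + m)))

theorem exists_hom_real_pos_of_orderUnit (hu : u ∈ K) (hnu : -u ∉ K)
    (hunit : ∀ x, ∃ n : ℕ, n • u - x ∈ K) :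
    ∃ t : G →+ ℝ, 0 < t u ∧ ∀ x ∈ K, 0 ≤ t x := by
  obtain ⟨T, hKT, hT⟩ := exists_maximal_neg_notMem hnu
  have := hasMemOrNegMem_of_maximal hT (hKT hu)
  obtain ⟨t, ht⟩ := exists_hom_real_nonneg_iff_mem T fun x y hy => by
    obtain ⟨m, hm⟩ := exists_neg_nsmul_sub_mem_of_maximal hT hy
    obtain ⟨n, hn⟩ := hunit x
    have hsum : (n * m) • y - x = n • (-(m • -y) - u) + (n • u - x) := by
      rw [mul_smul, smul_neg, neg_neg, smul_sub]; abel
    exact ⟨n * m, hsum ▸ T.add_mem (T.nsmul_mem hm n) (hKT hn)⟩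
  refine ⟨t, ?_, fun x hx => (ht x).2 (hKT hx)⟩
  simpa using mt (ht (-u)).1 hT.prop

/-- The elements `x` with `-n • u ≤ x ≤ n • u` for some `n`, in the preorder with positive cone
`K`: the largest subgroup in which `u` is an order unit. -/
def orderUnitSubgroup (K : AddSubmonoid G) (u : G) : AddSubgroup G where
  carrier := {x | ∃ n : ℕ, n • u - x ∈ K ∧ n • u + x ∈ K}
  zero_mem' := ⟨0, by simp⟩
  add_mem' := by
    rintro x y ⟨n, hx, hx'⟩ ⟨m, hy, hy'⟩
    refine ⟨n + m, ?_, ?_⟩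
    · simpa only [add_smul, add_sub_add_comm] using K.add_mem hx hy
    · simpa only [add_smul, add_add_add_comm] using K.add_mem hx' hy'
  neg_mem' := fun ⟨n, hx, hx'⟩ => ⟨n, by simpa using hx', by simpa [← sub_eq_add_neg] using hx⟩

theorem mem_orderUnitSubgroup {n : ℕ} (hu : u ∈ K) (hx : x ∈ K) (hxn : n • u - x ∈ K) :
    x ∈ orderUnitSubgroup K u :=
  ⟨n, hxn, K.add_mem (K.nsmul_mem hu n) hx⟩

theorem exists_hom_real_pos (hu : u ∈ K) (hnu : -u ∉ K) :
    ∃ t : G →+ ℝ, 0 < t u ∧ ∀ x ∈ K, ∀ n : ℕ, n • u - x ∈ K → 0 ≤ t x := by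
  let C := orderUnitSubgroup K u
  have huC : u ∈ C := mem_orderUnitSubgroup (n := 1) hu hu (by simp)
  obtain ⟨s, hs_pos, hs⟩ := exists_hom_real_pos_of_orderUnit (K := K.comap C.subtype)
    (u := ⟨u, huC⟩) hu hnu fun ⟨_, n, hn, _⟩ => ⟨n, hn⟩
  obtain ⟨t, ht⟩ := (Module.Baer.of_divisible ℝ).extension_property_addMonoidHom C.subtype
    C.subtype_injective s
  have ht_apply (x : C) : t x = s x := DFunLike.congr_fun ht x
  refine ⟨t, (ht_apply ⟨u, huC⟩).symm ▸ hs_pos, fun x hx n hn => ?_⟩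
  exact (ht_apply ⟨x, mem_orderUnitSubgroup hu hx hn⟩).symm ▸ hs _ hx

end State

section SharpQuasiIntegral

open scoped ENNReal NNReal

open Algebra (GrothendieckAddGroup)

variable {X : Type*} [AddCommMonoid X]

theorem IsQuasiIntegral.neg_of_notMem_mrange (hqi : IsQuasiIntegral X) (hX : IsSharp X) {u : X}
    (hu : u ≠ 0) :
    -GrothendieckAddGroup.of u ∉ AddMonoidHom.mrange (GrothendieckAddGroup.of (M := X)) := by
  rintro ⟨x, hx⟩
  have hux : u + x = 0 :=
    isGroupification_of.isQuasiIntegral_iff.1 hqi _ (by rw [map_add, hx, add_neg_cancel])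
  exact hu (hX u (IsAddUnit.of_add_eq_zero x hux))

theorem IsQuasiIntegral.exists_hom_ennreal (hqi : IsQuasiIntegral X) (hX : IsSharp X) {u : X}
    (hu : u ≠ 0) :
    ∃ (h : X →+ ℝ≥0∞) (t : X →+ ℝ), h u ≠ 0 ∧ h u ≠ ⊤ ∧ ∀ x, h x ≠ ⊤ → (h x).toReal = t x := by
  let η : X →+ GrothendieckAddGroup X := GrothendieckAddGroup.of
  obtain ⟨t, htu, ht⟩ := exists_hom_real_pos (K := AddMonoidHom.mrange η) ⟨u, rfl⟩
    (hqi.neg_of_notMem_mrange hX hu)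
  let F := faceClosure (AddSubmonoid.multiples u)
  have hF : IsFace F := isFace_faceClosure _
  have huF : u ∈ F := le_faceClosure _ (AddSubmonoid.mem_multiples u)
  have ht_nonneg (x : F) : 0 ≤ t (η x) := by
    obtain ⟨y, n, hn⟩ := x.2
    refine ht _ ⟨x, rfl⟩ n ⟨y, ?_⟩
    rw [eq_sub_iff_add_eq', ← map_add, ← map_nsmul]
    exact congrArg η hn.symm
  let χ : F →+ ℝ≥0 :=
    { toFun := fun x => ⟨t (η x), ht_nonneg x⟩
      map_zero' := NNReal.eq (t.comp η).map_zero
      map_add' := fun x y => NNReal.eq ((t.comp η).map_add x y) }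
  let h : X →+ ℝ≥0∞ := hF.extendByTop χ
  have h_of_mem {x : X} (hx : x ∈ F) : h x = χ ⟨x, hx⟩ := hF.extendByTop_of_mem χ hx
  refine ⟨h, t.comp η, ?_, ?_, fun x hx => ?_⟩
  · rw [h_of_mem huF, ENNReal.coe_ne_zero]
    exact fun h0 => htu.ne' (congrArg NNReal.toReal h0)
  · exact h_of_mem huF ▸ ENNReal.coe_ne_top
  · rw [h_of_mem (not_not.1 (mt (hF.extendByTop_eq_top_iff χ).2 hx))]
    rfl

end SharpQuasiIntegral

open scoped ENNReal in
theorem coe_ennreal_add_coe_real_eq_add_self_iff {y : ℝ≥0∞} {s : ℝ} :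
    (y : EReal) + s = y + y ↔ (y ≠ ⊤ → y.toReal = s) := by
  induction y with
  | top => simp
  | coe y =>
    simp only [ne_eq, ENNReal.coe_ne_top, not_false_eq_true, ENNReal.coe_toReal, forall_const,
      EReal.coe_nnreal_eq_coe_real, ← EReal.coe_add, EReal.coe_eq_coe_iff]
    rw [add_right_inj, eq_comm]

/-- A submonoid `A` of `B` has unique small extensions if each morphism from `A` to a monoid in
`Type` extends uniquely to `B`. -/
structure HasUniqueSmallExtensions {B : Type*} [AddCommMonoid B] (A : AddSubmonoid B) : Prop where
  exists_extension {Q : Type} [AddCommMonoid Q] (h : A →+ Q) :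
    ∃ k : B →+ Q, k.comp A.subtype = h
  hom_ext {Q : Type} [AddCommMonoid Q] {h k : B →+ Q} :
    h.comp A.subtype = k.comp A.subtype → h = k

namespace HasUniqueSmallExtensions

open scoped ENNReal

variable {B : Type*} [AddCommMonoid B] {A : AddSubmonoid B} (hA : HasUniqueSmallExtensions A)

include hA

theorem face_ext {F F' : AddSubmonoid B} (hF : IsFace F) (hF' : IsFace F')
    (h : ∀ a ∈ A, a ∈ F ↔ a ∈ F') : F = F' := by
  have extend_eq : hF.extendByTop (0 : F →+ ℕ) = hF'.extendByTop 0 :=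
    hA.hom_ext (AddMonoidHom.ext fun a =>
      (hF.extendByTop_zero_eq_extendByTop_zero_iff hF').2 (h a a.2))
  ext x
  exact (hF.extendByTop_zero_eq_extendByTop_zero_iff hF').1 (DFunLike.congr_fun extend_eq x)

theorem faceClosure_inf_eq {F : AddSubmonoid B} (hF : IsFace F) : faceClosure (A ⊓ F) = F :=
  hA.face_ext (isFace_faceClosure _) hF fun _ ha =>
    ⟨fun h => hF.faceClosure_le inf_le_right h, fun h => le_faceClosure _ ⟨ha, h⟩⟩

theorem eq_zero_of_mem_of_isAddUnit (hsharp : IsSharp A) {a : B} (ha : a ∈ A)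
    (hunit : IsAddUnit a) : a = 0 := by
  obtain ⟨k, hk⟩ :=
    hA.exists_extension (hsharp.isFace_bot.extendByTop (0 : (⊥ : AddSubmonoid A) →+ ℕ))
  have hka : k a = 0 := isAddUnit_iff_eq_zero.1 (hunit.map k)
  have ha_bot : (⟨a, ha⟩ : A) ∈ (⊥ : AddSubmonoid A) :=
    hsharp.isFace_bot.extendByTop_zero_eq_zero_iff.1
      ((DFunLike.congr_fun hk ⟨a, ha⟩).symm.trans hka)
  exact congrArg Subtype.val (AddSubmonoid.mem_bot.1 ha_bot)

theorem isSharp (hsharp : IsSharp A) : IsSharp B := by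
  intro b hb
  suffices (⟨b, hb⟩ : IsAddUnit.addSubmonoid B) = 0 from congrArg Subtype.val this
  refine CharacterModule.eq_zero_of_character_apply
    fun χ : IsAddUnit.addSubmonoid B →+ AddCircle (1 : ℚ) => ?_
  have extend_eq : isFace_addUnits.extendByTop χ = isFace_addUnits.extendByTop 0 := by
    refine hA.hom_ext (AddMonoidHom.ext fun a => ?_)
    by_cases ha : IsAddUnit (a : B)
    · simp [hA.eq_zero_of_mem_of_isAddUnit hsharp a.2 ha]
    · exact ((isFace_addUnits.extendByTop_eq_top_iff χ).2 ha).trans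
        ((isFace_addUnits.extendByTop_eq_top_iff 0).2 ha).symm
  apply WithTop.coe_injective
  calc (χ ⟨b, hb⟩ : WithTop (AddCircle (1 : ℚ)))
    _ = isFace_addUnits.extendByTop χ b := (isFace_addUnits.extendByTop_of_mem χ hb).symm
    _ = isFace_addUnits.extendByTop 0 b := DFunLike.congr_fun extend_eq b
    _ = 0 := isFace_addUnits.extendByTop_of_mem 0 hb

-- Adding `h` turns the conclusion into an equality of two morphisms `B →+ EReal`, which can be
-- tested on `A`: where `h` is `⊤`, both sides are `⊤`.
theorem toReal_eq_of_forall_mem {h : B →+ ℝ≥0∞} {t : B →+ ℝ}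
    (hht : ∀ a ∈ A, h a ≠ ⊤ → (h a).toReal = t a) {b : B} (hb : h b ≠ ⊤) :
    (h b).toReal = t b := by
  let coeENNReal : ℝ≥0∞ →+ EReal := ⟨⟨(↑), EReal.coe_ennreal_zero⟩, EReal.coe_ennreal_add⟩
  let coeReal : ℝ →+ EReal := ⟨⟨(↑), EReal.coe_zero⟩, EReal.coe_add⟩
  have hom_eq : coeENNReal.comp h + coeReal.comp t = coeENNReal.comp h + coeENNReal.comp h :=
    hA.hom_ext (AddMonoidHom.ext fun a =>
      coe_ennreal_add_coe_real_eq_add_self_iff.2 (hht a a.2))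
  exact coe_ennreal_add_coe_real_eq_add_self_iff.1 (DFunLike.congr_fun hom_eq b) hb

theorem isQuasiIntegral (hsharp : IsSharp A) (hqi : IsQuasiIntegral A) : IsQuasiIntegral B := by
  intro b k hbk
  obtain ⟨z, hzA, a', n, hn⟩ :
      b ∈ faceClosure (A ⊓ faceClosure (AddSubmonoid.multiples b)) := by
    rw [hA.faceClosure_inf_eq (isFace_faceClosure _)]
    exact le_faceClosure _ (AddSubmonoid.mem_multiples b)
  change n • b = b + z + a' at hn
  by_cases hbz : b + z = 0
  · exact hA.isSharp hsharp b (.of_add_eq_zero z hbz)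
  obtain ⟨h₀, t₀, h_ne_zero, h_ne_top, hht⟩ :=
    hqi.exists_hom_ennreal hsharp (u := ⟨b + z, hzA⟩) (fun h0 => hbz (congrArg Subtype.val h0))
  obtain ⟨h, rfl⟩ := hA.exists_extension h₀
  obtain ⟨t, rfl⟩ := hA.exists_extension t₀
  change h (b + z) ≠ 0 at h_ne_zero
  change h (b + z) ≠ ⊤ at h_ne_top
  have htb : t b = 0 := by simpa using congrArg t hbk
  have hb_ne_top : h b ≠ ⊤ := (ENNReal.add_ne_top.1 (map_add h b z ▸ h_ne_top)).1
  have hhb : h b = 0 := by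
    have := hA.toReal_eq_of_forall_mem (fun a ha => hht ⟨a, ha⟩) hb_ne_top
    exact ((ENNReal.toReal_eq_zero_iff _).1 (this.trans htb)).resolve_right hb_ne_top
  have hsum := congrArg h hn
  rw [map_nsmul, hhb, smul_zero, map_add h (b + z)] at hsum
  exact (h_ne_zero (add_eq_zero.1 hsum.symm).1).elim

end HasUniqueSmallExtensions

theorem IsLocalMonoidHom.map_eq_zero_iff {N M : Type*} [AddCommMonoid N] [AddCommMonoid M]
    {f : N →+ M} (hf : IsLocalMonoidHom f) (hM : IsSharp M) {n : N} : f n = 0 ↔ IsAddUnit n :=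
  ⟨fun hn => hf n (hn ▸ isAddUnit_zero), fun hn => hM _ (hn.map f)⟩

namespace IsMonPushout

universe w

variable {N M L P : Type*} [AddCommMonoid N] [AddCommMonoid M] [AddCommMonoid L]
  [AddCommMonoid P] {f : N →+ M} {g : N →+ L} {iM : M →+ P} {iL : L →+ P}

theorem map_left_eq_map_right (hpo : IsMonPushout f g iM iL) (n : N) : iM (f n) = iL (g n) :=
  DFunLike.congr_fun hpo.1 n

theorem symm (hpo : IsMonPushout.{_, _, _, _, w} f g iM iL) :
    IsMonPushout.{_, _, _, _, w} g f iL iM :=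
  ⟨hpo.1.symm, fun Q _ jL jM h => by simpa only [and_comm] using hpo.2 Q jM jL h.symm⟩

-- The test monoids of `IsMonPushout` live in a fixed universe, unrelated to that of `P`; monoids
-- in `Type` are the ones that can be lifted to any universe.
theorem existsUnique_lift (hpo : IsMonPushout.{_, _, _, _, w} f g iM iL) {Q : Type}
    [AddCommMonoid Q] {jM : M →+ Q} {jL : L →+ Q} (h : jM.comp f = jL.comp g) :
    ∃! k : P →+ Q, k.comp iM = jM ∧ k.comp iL = jL := by
  let up : Q →+ ULift.{w} Q := AddEquiv.ulift.symm.toAddMonoidHom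
  let down : ULift.{w} Q →+ Q := AddEquiv.ulift.toAddMonoidHom
  obtain ⟨k, ⟨hkM, hkL⟩, hk⟩ := hpo.2 (ULift.{w} Q) (up.comp jM) (up.comp jL)
    (congrArg up.comp h)
  refine ⟨down.comp k, ⟨congrArg down.comp hkM, congrArg down.comp hkL⟩, ?_⟩
  rintro k' ⟨rfl, rfl⟩
  exact congrArg down.comp (hk (up.comp k') ⟨rfl, rfl⟩)

theorem hasUniqueSmallExtensions (hpo : IsMonPushout f g iM iL) :
    HasUniqueSmallExtensions (AddMonoidHom.mrange (iM.coprod iL)) where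
  exists_extension h := by
    let j := h.comp (iM.coprod iL).mrangeRestrict
    have hj : (j.comp (.inl M L)).comp f = (j.comp (.inr M L)).comp g := AddMonoidHom.ext fun n =>
      congrArg h (Subtype.ext (by simp [hpo.map_left_eq_map_right n]))
    obtain ⟨k, hk, -⟩ := hpo.existsUnique_lift hj
    refine ⟨k, AddMonoidHom.ext ?_⟩
    rintro ⟨_, ⟨m, l⟩, rfl⟩
    calc k (iM m + iL l)
      _ = j (m, 0) + j (0, l) := by
        rw [map_add]
        exact congrArg₂ _ (DFunLike.congr_fun hk.1 m) (DFunLike.congr_fun hk.2 l)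
      _ = j (m, l) := by rw [← map_add, Prod.mk_add_mk, add_zero, zero_add]
  hom_ext {Q} _ h k hhk := by
    have heq (m : M) (l : L) : h (iM m + iL l) = k (iM m + iL l) :=
      DFunLike.congr_fun hhk ⟨iM m + iL l, (m, l), rfl⟩
    refine (hpo.existsUnique_lift (jM := k.comp iM) (jL := k.comp iL) ?_).unique
      ⟨?_, ?_⟩ ⟨rfl, rfl⟩
    · rw [AddMonoidHom.comp_assoc, hpo.1, AddMonoidHom.comp_assoc]
    · ext m
      simpa using heq m 0
    · ext l
      simpa using heq 0 l

theorem left_eq_zero_of_isAddUnit (hpo : IsMonPushout f g iM iL) (hM : IsSharp M) (hL : IsSharp L)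
    (hf : IsLocalMonoidHom f) (hg : IsLocalMonoidHom g) {m : M} (hm : IsAddUnit (iM m)) :
    m = 0 := by
  let indM : M →+ WithTop ℕ := hM.isFace_bot.extendByTop 0
  let indL : L →+ WithTop ℕ := hL.isFace_bot.extendByTop 0
  have compat : indM.comp f = indL.comp g := AddMonoidHom.ext fun n =>
    (hM.isFace_bot.extendByTop_zero_eq_extendByTop_zero_iff hL.isFace_bot).2
      ((hf.map_eq_zero_iff hM).trans (hg.map_eq_zero_iff hL).symm)
  obtain ⟨k, ⟨hkM, -⟩, -⟩ := hpo.existsUnique_lift compat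
  have hkm : indM m = 0 := (DFunLike.congr_fun hkM m).symm.trans
    (isAddUnit_iff_eq_zero.1 (hm.map k))
  exact AddSubmonoid.mem_bot.1 (hM.isFace_bot.extendByTop_zero_eq_zero_iff.1 hkm)

theorem eq_zero_of_isAddUnit_add (hpo : IsMonPushout f g iM iL) (hM : IsSharp M) (hL : IsSharp L)
    (hf : IsLocalMonoidHom f) (hg : IsLocalMonoidHom g) {m : M} {l : L}
    (h : IsAddUnit (iM m + iL l)) : m = 0 ∧ l = 0 :=
  ⟨hpo.left_eq_zero_of_isAddUnit hM hL hf hg (IsAddUnit.add_iff.1 h).1,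
    hpo.symm.left_eq_zero_of_isAddUnit hL hM hg hf (IsAddUnit.add_iff.1 h).2⟩

theorem isSharp_mrange_coprod (hpo : IsMonPushout f g iM iL) (hM : IsSharp M) (hL : IsSharp L)
    (hf : IsLocalMonoidHom f) (hg : IsLocalMonoidHom g) :
    IsSharp (AddMonoidHom.mrange (iM.coprod iL)) := by
  rintro ⟨_, ⟨m, l⟩, rfl⟩ h
  obtain ⟨rfl, rfl⟩ := hpo.eq_zero_of_isAddUnit_add hM hL hf hg
    (h.map (AddMonoidHom.mrange (iM.coprod iL)).subtype)
  exact Subtype.ext (by simp)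

section Groupification

variable {Ngp Mgp Lgp Pgp : Type*} [AddCommGroup Ngp] [AddCommGroup Mgp] [AddCommGroup Lgp]
  [AddCommGroup Pgp] {ηN : N →+ Ngp} {ηM : M →+ Mgp} {ηL : L →+ Lgp} {ηP : P →+ Pgp}
  {F : Ngp →+ Mgp} {G' : Ngp →+ Lgp}

theorem map_add_eq_zero_of_eq (hpo : IsMonPushout f g iM iL) (hgpN : IsGroupification ηN)
    (hgpM : IsGroupification ηM) (hgpL : IsGroupification ηL)
    (hF : F.comp ηN = ηM.comp f) (hG : G'.comp ηN = ηL.comp g)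
    {n : Ngp} {m : M} {l : L} (hm : F n = ηM m) (hl : G' n = -ηL l) :
    ηP (iM m + iL l) = 0 := by
  obtain ⟨a, b, rfl⟩ := hgpN.1 n
  have hF' (x : N) : F (ηN x) = ηM (f x) := DFunLike.congr_fun hF x
  have hG' (x : N) : G' (ηN x) = ηL (g x) := DFunLike.congr_fun hG x
  have hM_eq : ηM (m + f b) = ηM (f a) := by
    rw [map_add, ← hm, map_sub, hF', hF', sub_add_cancel]
  have hL_eq : ηL (l + g a) = ηL (g b) := by
    rw [map_sub, hG', hG'] at hl
    rw [map_add, ← sub_add_cancel (ηL (g a)) (ηL (g b)), hl, add_neg_cancel_left]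
  have hPM := hgpM.map_eq_map_of_eq (ηP.comp iM) hM_eq
  have hPL := hgpL.map_eq_map_of_eq (ηP.comp iL) hL_eq
  simp only [map_add, AddMonoidHom.comp_apply, hpo.map_left_eq_map_right] at hPM hPL
  rw [map_add, ← add_eq_right (b := ηP (iL (g b)) + ηP (iL (g a))), add_add_add_comm, hPM, hPL,
    add_comm]

theorem exists_of_map_add_eq_zero (hpo : IsMonPushout f g iM iL) (hgpP : IsGroupification ηP)
    (hF : F.comp ηN = ηM.comp f) (hG : G'.comp ηN = ηL.comp g)
    {m : M} {l : L} (hml : ηP (iM m + iL l) = 0) :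
    ∃ n, F n = ηM m ∧ G' n = -ηL l := by
  let R : AddSubgroup (Mgp × Lgp) := (F.prod (-G')).range
  suffices (ηM m, ηL l) ∈ R by
    obtain ⟨n, hn⟩ := this
    exact ⟨n, congrArg Prod.fst hn, neg_eq_iff_eq_neg.1 (congrArg Prod.snd hn)⟩
  refine (QuotientAddGroup.eq_zero_iff _).1 (CharacterModule.eq_zero_of_character_apply
    fun c : (Mgp × Lgp) ⧸ R →+ AddCircle (1 : ℚ) => ?_)
  let q : Mgp × Lgp →+ AddCircle (1 : ℚ) := c.comp (QuotientAddGroup.mk' R)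
  have hq (n : Ngp) : q (F n, 0) = q (0, G' n) := by
    have hn : (F n, -G' n) ∈ R := ⟨n, rfl⟩
    have : q (F n, -G' n) = 0 :=
      (congrArg c ((QuotientAddGroup.eq_zero_iff _).2 hn)).trans c.map_zero
    rw [← sub_eq_zero, ← map_sub, Prod.mk_sub_mk, sub_zero, zero_sub, this]
  obtain ⟨r, ⟨hrM, hrL⟩, -⟩ := hpo.existsUnique_lift
    (jM := (q.comp (.inl Mgp Lgp)).comp ηM) (jL := (q.comp (.inr Mgp Lgp)).comp ηL) (by
      rw [AddMonoidHom.comp_assoc, ← hF, AddMonoidHom.comp_assoc _ ηL, ← hG]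
      exact AddMonoidHom.ext fun n => hq (ηN n))
  calc q (ηM m, ηL l)
    _ = q (ηM m, 0) + q (0, ηL l) := by rw [← map_add, Prod.mk_add_mk, add_zero, zero_add]
    _ = r (iM m) + r (iL l) :=
      (congrArg₂ _ (DFunLike.congr_fun hrM m) (DFunLike.congr_fun hrL l)).symm
    _ = r 0 := by rw [← map_add, hgpP.map_eq_map_of_eq r (hml.trans ηP.map_zero.symm)]
    _ = 0 := r.map_zero

end Groupification

end IsMonPushout

theorem stmt8_general {N M L P Ngp Mgp Lgp Pgp : Type*}
    [AddCommMonoid N] [AddCommMonoid M] [AddCommMonoid L] [AddCommMonoid P]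
    [AddCommGroup Ngp] [AddCommGroup Mgp] [AddCommGroup Lgp] [AddCommGroup Pgp]
    (hMs : IsSharp M) (hLs : IsSharp L)
    (f : N →+ M) (g : N →+ L) (hf : IsLocalMonoidHom f) (hg : IsLocalMonoidHom g)
    (iM : M →+ P) (iL : L →+ P) (hpo : IsMonPushout f g iM iL)
    (ηN : N →+ Ngp) (hgpN : IsGroupification ηN)
    (ηM : M →+ Mgp) (hgpM : IsGroupification ηM)
    (ηL : L →+ Lgp) (hgpL : IsGroupification ηL)
    (ηP : P →+ Pgp) (hgpP : IsGroupification ηP)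
    (hMqi : ∀ m : M, ηM m = 0 → m = 0) (hLqi : ∀ l : L, ηL l = 0 → l = 0)
    (F : Ngp →+ Mgp) (hF : F.comp ηN = ηM.comp f)
    (G' : Ngp →+ Lgp) (hG : G'.comp ηN = ηL.comp g) :
    (∀ p : P, ηP p = 0 → p = 0) ↔
      ∀ n : Ngp, F n ∈ AddMonoidHom.mrange ηM → -(G' n) ∈ AddMonoidHom.mrange ηL →
        F n = 0 ∧ G' n = 0 := by
  rw [← hgpP.isQuasiIntegral_iff]
  constructor
  · rintro hP n ⟨m, hm⟩ ⟨l, hl⟩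
    have hml : ηP (iM m + iL l) = 0 := hpo.map_add_eq_zero_of_eq hgpN hgpM hgpL hF hG hm.symm
      (eq_neg_of_add_eq_zero_left (by rw [hl, add_neg_cancel]))
    obtain ⟨rfl, rfl⟩ := hpo.eq_zero_of_isAddUnit_add hMs hLs hf hg
      (hgpP.isQuasiIntegral_iff.1 hP _ hml ▸ isAddUnit_zero)
    exact ⟨by rw [← hm, map_zero], by simpa using hl.symm⟩
  · intro hR
    refine hpo.hasUniqueSmallExtensions.isQuasiIntegral
      (hpo.isSharp_mrange_coprod hMs hLs hf hg) ?_
    rintro ⟨_, ⟨m, l⟩, rfl⟩ k hk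
    have hml : ηP (iM m + iL l) = 0 := hgpP.map_eq_zero_iff.2 ⟨k, congrArg Subtype.val hk⟩
    obtain ⟨n, hm, hl⟩ := hpo.exists_of_map_add_eq_zero hgpP hF hG hml
    obtain ⟨hFn, hGn⟩ := hR n ⟨m, hm.symm⟩ ⟨l, by rw [hl, neg_neg]⟩
    obtain rfl : m = 0 := hMqi m (hm ▸ hFn)
    obtain rfl : l = 0 := hLqi l (neg_eq_zero.1 (hl ▸ hGn))
    exact Subtype.ext (by simp)

/-- Let `L, M, N` be sharp quasi-integral commutative monoids and `f : N → M`,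
`g : N → L` local morphisms.  Then `M ⊔_N L` is quasi-integral if and only if for every
`n ∈ N^gp` with `f^gp n ∈ M^int` and `-(g^gp n) ∈ L^int`, one has `f^gp n = 0` and
`g^gp n = 0`. -/
theorem stmt8 {N M L P Ngp Mgp Lgp Pgp : Type*}
    [AddCommMonoid N] [AddCommMonoid M] [AddCommMonoid L] [AddCommMonoid P]
    [AddCommGroup Ngp] [AddCommGroup Mgp] [AddCommGroup Lgp] [AddCommGroup Pgp]
    (hNs : IsSharp N) (hMs : IsSharp M) (hLs : IsSharp L)
    (f : N →+ M) (g : N →+ L) (hf : IsLocalMonoidHom f) (hg : IsLocalMonoidHom g)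
    (iM : M →+ P) (iL : L →+ P) (hpo : IsMonPushout f g iM iL)
    (ηN : N →+ Ngp) (hgpN : IsGroupification ηN)
    (ηM : M →+ Mgp) (hgpM : IsGroupification ηM)
    (ηL : L →+ Lgp) (hgpL : IsGroupification ηL)
    (ηP : P →+ Pgp) (hgpP : IsGroupification ηP)
    (hMqi : ∀ m : M, ηM m = 0 → m = 0) (hLqi : ∀ l : L, ηL l = 0 → l = 0)
    (F : Ngp →+ Mgp) (hF : F.comp ηN = ηM.comp f)
    (G' : Ngp →+ Lgp) (hG : G'.comp ηN = ηL.comp g) :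
    (∀ p : P, ηP p = 0 → p = 0) ↔
      ∀ n : Ngp, F n ∈ AddMonoidHom.mrange ηM → -(G' n) ∈ AddMonoidHom.mrange ηL →
        F n = 0 ∧ G' n = 0 :=
  stmt8_general hMs hLs f g hf hg iM iL hpo ηN hgpN ηM hgpM ηL hgpL ηP hgpP hMqi hLqi F hF G' hG
end

section
/- Let L, M, N be sharp fs monoids and f : N → M, g : N → L local morphisms of monoids. Let P = M ⊔_N L be the push-out in commutative monoids. If P is quasi-integral, then P^int is sharp and fine, P^sat is fs, and the unit group (P^sat)^× is a finite abelian group. -/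
universe w

section FinitelyGeneratedGroup

theorem finite_preimage_of_finite_ker {G H : Type*} [AddGroup G] [AddGroup H] (c : G →+ H)
    [Finite c.ker] {s : Set H} (hs : s.Finite) : (c ⁻¹' s).Finite := by
  refine hs.preimage' fun b _ => ?_
  obtain hempty | ⟨x, rfl⟩ := (c ⁻¹' {b}).eq_empty_or_nonempty
  · simp only [hempty, Set.finite_empty]
  · have : Finite (c ⁻¹' {c x}) := .of_equiv _ (c.fiberEquivKer x).symm
    exact Set.toFinite _

theorem exists_addMonoidHom_pi_int_finite_ker (G : Type*) [AddCommGroup G] [AddGroup.FG G] :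
    ∃ (n : ℕ) (c : G →+ (Fin n → ℤ)), Finite c.ker := by
  obtain ⟨n, ι, _, p, hp, e, ⟨φ⟩⟩ := AddCommGroup.equiv_free_prod_directSum_zmod G
  have (i : ι) : NeZero (p i ^ e i) := ⟨pow_ne_zero _ (hp i).ne_zero⟩
  have : Finite (DirectSum ι fun i => ZMod (p i ^ e i)) :=
    Finite.of_equiv _ (DirectSum.addEquivProd fun i => ZMod (p i ^ e i)).symm.toEquiv
  let c : G →+ (Fin n → ℤ) :=
    (Finsupp.coeFnAddHom.comp (AddMonoidHom.fst _ _)).comp φ.toAddMonoidHom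
  refine ⟨n, c, Finite.of_injective (fun x : c.ker => (φ x).2) fun x y hxy => ?_⟩
  have hfst : (φ x).1 = (φ y).1 := DFunLike.coe_injective (x.2.trans y.2.symm)
  exact Subtype.ext (φ.injective (Prod.ext hfst hxy))

theorem finite_setOf_isOfFinAddOrder (G : Type*) [AddCommGroup G] [AddGroup.FG G] :
    {x : G | IsOfFinAddOrder x}.Finite := by
  obtain ⟨n, c, _⟩ := exists_addMonoidHom_pi_int_finite_ker G
  refine (finite_preimage_of_finite_ker c (Set.finite_singleton 0)).subset fun x hx => ?_
  obtain ⟨a, ha, hax⟩ := hx.exists_nsmul_eq_zero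
  have : a • c x = 0 := by rw [← map_nsmul, hax, map_zero]
  exact (smul_eq_zero.mp this).resolve_left ha.ne'

theorem IsGroupification.addGroupFG {M G : Type*} [AddCommMonoid M] [AddCommGroup G] {η : M →+ G}
    (hη : IsGroupification η) (hfg : (AddMonoidHom.mrange η).FG) : AddGroup.FG G := by
  obtain ⟨S, hS⟩ := hfg
  have hmem (a : M) : η a ∈ AddSubgroup.closure (S : Set G) :=
    AddSubgroup.le_closure_toAddSubmonoid _ (hS ▸ ⟨a, rfl⟩)
  refine ⟨⟨S, eq_top_iff.mpr fun x _ => ?_⟩⟩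
  obtain ⟨a, b, rfl⟩ := hη.1 x
  exact sub_mem (hmem a) (hmem b)

end FinitelyGeneratedGroup

section Saturation

variable {G : Type*} [AddCommGroup G]

theorem mem_saturationOf_of_nsmul_mem {s : Set G} {a : ℕ} (ha : 0 < a) {x : G}
    (hx : a • x ∈ saturationOf s) : x ∈ saturationOf s := by
  obtain ⟨b, hb, hbx⟩ := hx
  exact ⟨b * a, Nat.mul_pos hb ha, by rwa [mul_smul]⟩

/-- The saturation of a submonoid of an abelian group, as a submonoid. -/
def saturationSubmonoid (T : AddSubmonoid G) : AddSubmonoid G where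
  carrier := saturationOf T
  zero_mem' := ⟨1, one_pos, by rw [smul_zero]; exact T.zero_mem⟩
  add_mem' := by
    rintro x y ⟨a, ha, hx⟩ ⟨b, hb, hy⟩
    refine ⟨b * a, Nat.mul_pos hb ha, ?_⟩
    rw [smul_add, mul_smul, mul_comm b a, mul_smul]
    exact add_mem (nsmul_mem hx b) (nsmul_mem hy a)

theorem isOfFinAddOrder_of_mem_saturationOf {T : AddSubmonoid G}
    (hT : ∀ x ∈ T, -x ∈ T → x = 0) {x : G} (hx : x ∈ saturationOf (T : Set G))
    (hneg : -x ∈ saturationOf (T : Set G)) : IsOfFinAddOrder x := by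
  obtain ⟨a, ha, hax⟩ := hx
  obtain ⟨b, hb, hbx⟩ := hneg
  refine isOfFinAddOrder_iff_nsmul_eq_zero.mpr ⟨b * a, Nat.mul_pos hb ha, hT _ ?_ ?_⟩
  · rw [mul_smul]
    exact nsmul_mem hax b
  · rw [mul_comm, mul_smul, ← smul_neg, ← smul_neg]
    exact nsmul_mem hbx a

/-- The zonotope of a finite subset `S` of an abelian group: the elements of the form
`∑ i ∈ S, t i • i` with rational coefficients `t i ∈ [0, 1]`. The coefficients are encoded by a
common denominator `a` and numerators `r i`, since `G` need not be divisible
or torsion-free. -/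
def zonotope (S : Finset G) : Set G :=
  {x | ∃ a : ℕ, 0 < a ∧ ∃ r : G → ℕ, (∀ i ∈ S, r i ≤ a) ∧ a • x = ∑ i ∈ S, r i • i}

theorem abs_le_sum_abs_of_nsmul_eq_sum {ι A : Type*} [AddCommGroup A] [LinearOrder A]
    [IsOrderedAddMonoid A] {S : Finset ι} {a : ℕ} (ha : 0 < a) {r : ι → ℕ}
    (hr : ∀ i ∈ S, r i ≤ a) {x : A} {v : ι → A} (hx : a • x = ∑ i ∈ S, r i • v i) :
    |x| ≤ ∑ i ∈ S, |v i| := by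
  refine le_of_nsmul_le_nsmul_right ha.ne' ?_
  calc a • |x| = |∑ i ∈ S, r i • v i| := by rw [← hx, abs_nsmul]
    _ ≤ ∑ i ∈ S, |r i • v i| := Finset.abs_sum_le_sum_abs _ _
    _ = ∑ i ∈ S, r i • |v i| := by simp only [abs_nsmul]
    _ ≤ ∑ i ∈ S, a • |v i| :=
      Finset.sum_le_sum fun i hi => nsmul_le_nsmul_left (abs_nonneg _) (hr i hi)
    _ = a • ∑ i ∈ S, |v i| := Finset.smul_sum.symm

theorem zonotope_finite [AddGroup.FG G] (S : Finset G) : (zonotope S).Finite := by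
  obtain ⟨n, c, _⟩ := exists_addMonoidHom_pi_int_finite_ker G
  let B : Fin n → ℤ := fun j => ∑ i ∈ S, |c i j|
  refine (finite_preimage_of_finite_ker c (Set.finite_Icc (-B) B)).subset ?_
  rintro x ⟨a, ha, r, hr, hx⟩
  have hbound (j : Fin n) : |c x j| ≤ B j := by
    refine abs_le_sum_abs_of_nsmul_eq_sum ha hr ?_
    simpa only [map_nsmul, map_sum, Pi.smul_apply, Finset.sum_apply] using
      congrFun (congrArg c hx) j
  exact ⟨fun j => (abs_le.mp (hbound j)).1, fun j => (abs_le.mp (hbound j)).2⟩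

theorem subset_zonotope (S : Finset G) : (S : Set G) ⊆ zonotope S := by
  classical
  intro x hx
  refine ⟨1, one_pos, Pi.single x 1, fun i _ => ?_, ?_⟩
  · obtain rfl | hne := eq_or_ne i x
    · rw [Pi.single_eq_same]
    · rw [Pi.single_eq_of_ne hne]
      exact zero_le_one
  · simp [Pi.single_apply, ite_smul, Finset.mem_coe.mp hx]

theorem zonotope_subset_saturationOf_closure (S : Finset G) :
    zonotope S ⊆ saturationOf (AddSubmonoid.closure (S : Set G) : Set G) := by
  rintro x ⟨a, ha, r, -, hx⟩
  refine ⟨a, ha, hx ▸ sum_mem fun i hi => ?_⟩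
  exact nsmul_mem (AddSubmonoid.subset_closure hi) _

theorem closure_zonotope_eq_saturationSubmonoid (S : Finset G) :
    AddSubmonoid.closure (zonotope S) = saturationSubmonoid (AddSubmonoid.closure (S : Set G)) := by
  refine le_antisymm
    (AddSubmonoid.closure_le.mpr (zonotope_subset_saturationOf_closure S)) ?_
  rintro x ⟨a, ha, hx⟩
  obtain ⟨r, -, hr⟩ := AddSubmonoid.mem_closure_finset.mp hx
  -- Split the coefficient `r i / a` of `i` into its integral and its fractional part.
  let q : G := ∑ i ∈ S, (r i / a) • i
  have hq : q ∈ AddSubmonoid.closure (zonotope S) := sum_mem fun i hi =>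
    nsmul_mem (AddSubmonoid.subset_closure (subset_zonotope S hi)) _
  have hfract : x - q ∈ zonotope S := by
    refine ⟨a, ha, fun i => r i % a, fun i _ => (Nat.mod_lt _ ha).le, ?_⟩
    calc a • (x - q) = ∑ i ∈ S, (r i • i - (a * (r i / a)) • i) := by
          simp only [q, smul_sub, ← hr, Finset.smul_sum, Finset.sum_sub_distrib, mul_smul]
      _ = ∑ i ∈ S, (r i % a) • i := Finset.sum_congr rfl fun i _ => by
          rw [sub_eq_iff_eq_add, ← add_smul, Nat.mod_add_div]
  simpa only [sub_add_cancel] using add_mem (AddSubmonoid.subset_closure hfract) hq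

theorem fg_saturationSubmonoid [AddGroup.FG G] {T : AddSubmonoid G} (hT : T.FG) :
    (saturationSubmonoid T).FG := by
  obtain ⟨S, rfl⟩ := hT
  rw [← closure_zonotope_eq_saturationSubmonoid]
  exact (AddSubmonoid.fg_iff _).mpr ⟨_, rfl, zonotope_finite S⟩

end Saturation

theorem countable_of_addMonoidFG (M : Type*) [AddMonoid M] [h : AddMonoid.FG M] : Countable M := by
  obtain ⟨S, hS, φ, hφ⟩ := AddMonoid.fg_iff_exists_freeAddMonoid_hom_surjective.mp h
  have : Finite S := hS
  have : Countable (FreeAddMonoid S) := FreeAddMonoid.toList.injective.countable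
  exact hφ.countable

section Sharp

variable {N M L : Type*} [AddCommMonoid N] [AddCommMonoid M] [AddCommMonoid L]

theorem IsSharp.add_eq_zero_iff (hM : IsSharp M) {a b : M} : a + b = 0 ↔ a = 0 ∧ b = 0 := by
  refine ⟨fun h => ?_, fun ⟨ha, hb⟩ => by rw [ha, hb, add_zero]⟩
  exact ⟨hM a (.of_add_eq_zero b h), hM b (.of_add_eq_zero a (add_comm a b ▸ h))⟩

open Classical in
/-- The morphism from a sharp monoid to the two-element monoid `{0, ∞}` which sends every nonzero
element to `∞`. The target is realised as `WithTop PUnit`, which lives in every universe. -/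
noncomputable def IsSharp.indicatorTop (hM : IsSharp M) : M →+ WithTop PUnit.{w + 1} where
  toFun m := if m = 0 then 0 else ⊤
  map_zero' := if_pos rfl
  map_add' a b := by
    by_cases ha : a = 0 <;> by_cases hb : b = 0 <;> simp [hM.add_eq_zero_iff, ha, hb]

theorem IsSharp.indicatorTop_eq_zero_iff (hM : IsSharp M) {m : M} :
    hM.indicatorTop.{w} m = 0 ↔ m = 0 := by
  simp [IsSharp.indicatorTop]

theorem IsLocalMonoidHom.map_eq_zero_of_map_eq_zero {f : N →+ M} (hf : IsLocalMonoidHom f)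
    (hL : IsSharp L) (g : N →+ L) {n : N} (hn : f n = 0) : g n = 0 :=
  hL _ ((hf n (hn ▸ isAddUnit_zero)).map g)

theorem IsSharp.indicatorTop_comp_eq (hM : IsSharp M) (hL : IsSharp L) {f : N →+ M} {g : N →+ L}
    (hf : IsLocalMonoidHom f) (hg : IsLocalMonoidHom g) :
    hM.indicatorTop.{w}.comp f = hL.indicatorTop.comp g := by
  classical
  ext n
  exact if_congr
    ⟨hf.map_eq_zero_of_map_eq_zero hL g, hg.map_eq_zero_of_map_eq_zero hM f⟩ rfl rfl

end Sharp

namespace IsMonPushout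

variable {N M L P A : Type*} [AddCommMonoid N] [AddCommMonoid M] [AddCommMonoid L]
  [AddCommMonoid P] [AddCommGroup A] {f : N →+ M} {g : N →+ L} {iM : M →+ P} {iL : L →+ P}

theorem exists_desc (hpo : IsMonPushout.{_, _, _, _, w} f g iM iL) {Q : Type*}
    [AddCommMonoid Q] [Small.{w} Q] {jM : M →+ Q} {jL : L →+ Q} (hj : jM.comp f = jL.comp g) :
    ∃ h : P →+ Q, h.comp iM = jM ∧ h.comp iL = jL := by
  let e : Shrink.{w} Q ≃+ Q := Shrink.addEquiv
  obtain ⟨h, ⟨hM, hL⟩, -⟩ := hpo.2 (Shrink.{w} Q) (e.symm.toAddMonoidHom.comp jM)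
    (e.symm.toAddMonoidHom.comp jL) (by rw [AddMonoidHom.comp_assoc, hj, AddMonoidHom.comp_assoc])
  refine ⟨e.toAddMonoidHom.comp h, ?_, ?_⟩
  · rw [AddMonoidHom.comp_assoc, hM]
    ext m
    exact e.apply_symm_apply (jM m)
  · rw [AddMonoidHom.comp_assoc, hL]
    ext l
    exact e.apply_symm_apply (jL l)

-- The universal property only tests against monoids in the universe `w`, which need not contain
-- `A`; characters with values in a copy of `ℚ/ℤ` in that universe separate the points of `A`.
theorem hom_ext (hpo : IsMonPushout.{_, _, _, _, w} f g iM iL) {φ ψ : P →+ A}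
    (hM : φ.comp iM = ψ.comp iM) (hL : φ.comp iL = ψ.comp iL) : φ = ψ := by
  ext p
  refine sub_eq_zero.mp (CharacterModule.eq_zero_of_character_apply fun χ => ?_)
  let χ' : A →+ ULift.{w} (AddCircle (1 : ℚ)) := AddEquiv.ulift.symm.toAddMonoidHom.comp χ
  have hcomm : ((χ'.comp φ).comp iM).comp f = ((χ'.comp φ).comp iL).comp g :=
    congrArg (χ'.comp φ).comp hpo.1
  have huniq : χ'.comp φ = χ'.comp ψ := (hpo.2 _ _ _ hcomm).unique ⟨rfl, rfl⟩
    ⟨by simp only [AddMonoidHom.comp_assoc, hM], by simp only [AddMonoidHom.comp_assoc, hL]⟩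
  rw [map_sub, sub_eq_zero]
  exact congrArg ULift.down (DFunLike.congr_fun huniq p)

theorem mrange_eq_mrange_coprod [Small.{w} M] [Small.{w} L]
    (hpo : IsMonPushout.{_, _, _, _, w} f g iM iL) (φ : P →+ A) :
    AddMonoidHom.mrange φ = AddMonoidHom.mrange ((φ.comp iM).coprod (φ.comp iL)) := by
  let π := (φ.comp iM).coprod (φ.comp iL)
  let T := AddMonoidHom.mrange π
  have : Small.{w} T := small_range π
  apply le_antisymm
  · let jM := π.mrangeRestrict.comp (AddMonoidHom.inl M L)
    let jL := π.mrangeRestrict.comp (AddMonoidHom.inr M L)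
    have hjM : T.subtype.comp jM = φ.comp iM := AddMonoidHom.coprod_comp_inl _ _
    have hjL : T.subtype.comp jL = φ.comp iL := AddMonoidHom.coprod_comp_inr _ _
    have hj : jM.comp f = jL.comp g := by
      ext n
      calc T.subtype (jM (f n)) = φ (iM (f n)) := DFunLike.congr_fun hjM (f n)
        _ = φ (iL (g n)) := congrArg φ (DFunLike.congr_fun hpo.1 n)
        _ = T.subtype (jL (g n)) := (DFunLike.congr_fun hjL (g n)).symm
    obtain ⟨h, hM, hL⟩ := hpo.exists_desc hj
    have hφ : φ = T.subtype.comp h := hpo.hom_ext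
      (by rw [AddMonoidHom.comp_assoc, hM, hjM]) (by rw [AddMonoidHom.comp_assoc, hL, hjL])
    rintro _ ⟨p, rfl⟩
    rw [DFunLike.congr_fun hφ p]
    exact (h p).2
  · rintro _ ⟨⟨m, l⟩, rfl⟩
    exact ⟨iM m + iL l, map_add φ _ _⟩

theorem fg_mrange [AddMonoid.FG M] [AddMonoid.FG L]
    (hpo : IsMonPushout.{_, _, _, _, w} f g iM iL) (φ : P →+ A) : (AddMonoidHom.mrange φ).FG := by
  have := countable_of_addMonoidFG M
  have := countable_of_addMonoidFG L
  rw [hpo.mrange_eq_mrange_coprod φ, ← AddMonoid.fg_iff_addSubmonoid_fg]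
  exact AddMonoid.fg_range _

theorem eq_zero_of_add_eq_zero (hpo : IsMonPushout.{_, _, _, _, w} f g iM iL) (hM : IsSharp M)
    (hL : IsSharp L) (hf : IsLocalMonoidHom f) (hg : IsLocalMonoidHom g) {m : M} {l : L}
    (h : iM m + iL l = 0) : m = 0 ∧ l = 0 := by
  obtain ⟨k, hkM, hkL⟩ := hpo.exists_desc (hM.indicatorTop_comp_eq.{w} hL hf hg)
  have hsum : hM.indicatorTop.{w} m + hL.indicatorTop.{w} l = 0 := by
    rw [← hkM, ← hkL, AddMonoidHom.comp_apply, AddMonoidHom.comp_apply, ← map_add, h, map_zero]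
  rwa [add_eq_zero, hM.indicatorTop_eq_zero_iff, hL.indicatorTop_eq_zero_iff] at hsum

theorem eq_zero_of_neg_mem_mrange [Small.{w} M] [Small.{w} L]
    (hpo : IsMonPushout.{_, _, _, _, w} f g iM iL) (hM : IsSharp M) (hL : IsSharp L)
    (hf : IsLocalMonoidHom f) (hg : IsLocalMonoidHom g) {φ : P →+ A}
    (hφ : ∀ p, φ p = 0 → p = 0) {x : A} (hx : x ∈ AddMonoidHom.mrange φ)
    (hneg : -x ∈ AddMonoidHom.mrange φ) : x = 0 := by
  rw [hpo.mrange_eq_mrange_coprod φ] at hx hneg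
  obtain ⟨⟨m, l⟩, rfl⟩ := hx
  obtain ⟨⟨m', l'⟩, hneg⟩ := hneg
  have hsum : iM (m + m') + iL (l + l') = 0 := by
    apply hφ
    calc φ (iM (m + m') + iL (l + l'))
        = (φ.comp iM).coprod (φ.comp iL) ((m', l') + (m, l)) := by simp [add_comm]
      _ = 0 := by rw [map_add, hneg, neg_add_cancel]
  obtain ⟨hm, hl⟩ := hpo.eq_zero_of_add_eq_zero hM hL hf hg hsum
  rw [(hM.add_eq_zero_iff.mp hm).1, (hL.add_eq_zero_iff.mp hl).1]
  exact map_zero _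

end IsMonPushout

theorem stmt13_general {N M L P Pgp : Type*}
    [AddCommMonoid N] [AddCommMonoid M] [AddCommMonoid L] [AddCommMonoid P] [AddCommGroup Pgp]
    (hMsharp : IsSharp M) (hMfg : AddMonoid.FG M) (hLsharp : IsSharp L) (hLfg : AddMonoid.FG L)
    (f : N →+ M) (g : N →+ L) (hf : IsLocalMonoidHom f) (hg : IsLocalMonoidHom g)
    (iM : M →+ P) (iL : L →+ P) (hpo : IsMonPushout f g iM iL)
    (ηP : P →+ Pgp) (hgpP : IsGroupification ηP)
    (hqi : ∀ p : P, ηP p = 0 → p = 0) :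
    (∀ x ∈ AddMonoidHom.mrange ηP, -x ∈ AddMonoidHom.mrange ηP → x = 0) ∧
    (AddMonoidHom.mrange ηP).FG ∧
    (∀ x : Pgp,
      (∃ a : ℕ, 0 < a ∧ a • x ∈ saturationOf (↑(AddMonoidHom.mrange ηP) : Set Pgp)) →
        x ∈ saturationOf (↑(AddMonoidHom.mrange ηP) : Set Pgp)) ∧
    (∃ S : Finset Pgp,
      (↑(AddSubmonoid.closure (S : Set Pgp)) : Set Pgp) =
        saturationOf (↑(AddMonoidHom.mrange ηP) : Set Pgp)) ∧
    Set.Finite {x : Pgp | x ∈ saturationOf (↑(AddMonoidHom.mrange ηP) : Set Pgp) ∧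
      -x ∈ saturationOf (↑(AddMonoidHom.mrange ηP) : Set Pgp)} := by
  have := countable_of_addMonoidFG M
  have := countable_of_addMonoidFG L
  have hsharp : ∀ x ∈ AddMonoidHom.mrange ηP, -x ∈ AddMonoidHom.mrange ηP → x = 0 :=
    fun _ => hpo.eq_zero_of_neg_mem_mrange hMsharp hLsharp hf hg hqi
  have hfg : (AddMonoidHom.mrange ηP).FG := hpo.fg_mrange ηP
  have : AddGroup.FG Pgp := hgpP.addGroupFG hfg
  obtain ⟨S, hS⟩ := fg_saturationSubmonoid hfg
  refine ⟨hsharp, hfg, fun x ⟨a, ha, hx⟩ => mem_saturationOf_of_nsmul_mem ha hx,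
    ⟨S, congrArg SetLike.coe hS⟩, ?_⟩
  exact (finite_setOf_isOfFinAddOrder Pgp).subset fun x ⟨hx, hneg⟩ =>
    isOfFinAddOrder_of_mem_saturationOf hsharp hx hneg

/-- Let `L, M, N` be sharp fs monoids, `f : N → M`, `g : N → L` local morphisms, and
`P = M ⊔_N L` the push-out.  If `P` is quasi-integral, then `P^int` (the image of `P` in
its groupification) is sharp and fine, `P^sat` is fs, and the unit group `(P^sat)^×` is
finite. -/
theorem stmt13 {N M L P Ngp Mgp Lgp Pgp : Type*}
    [AddCommMonoid N] [AddCommMonoid M] [AddCommMonoid L] [AddCommMonoid P]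
    [AddCommGroup Ngp] [AddCommGroup Mgp] [AddCommGroup Lgp] [AddCommGroup Pgp]
    (ηN : N →+ Ngp) (hgpN : IsGroupification ηN) (hNinj : Function.Injective ηN)
    (hNsharp : IsSharp N) (hNfg : AddMonoid.FG N)
    (hNsat : ∀ x : Ngp, (∃ a : ℕ, 0 < a ∧ a • x ∈ AddMonoidHom.mrange ηN) →
      x ∈ AddMonoidHom.mrange ηN)
    (ηM : M →+ Mgp) (hgpM : IsGroupification ηM) (hMinj : Function.Injective ηM)
    (hMsharp : IsSharp M) (hMfg : AddMonoid.FG M)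
    (hMsat : ∀ x : Mgp, (∃ a : ℕ, 0 < a ∧ a • x ∈ AddMonoidHom.mrange ηM) →
      x ∈ AddMonoidHom.mrange ηM)
    (ηL : L →+ Lgp) (hgpL : IsGroupification ηL) (hLinj : Function.Injective ηL)
    (hLsharp : IsSharp L) (hLfg : AddMonoid.FG L)
    (hLsat : ∀ x : Lgp, (∃ a : ℕ, 0 < a ∧ a • x ∈ AddMonoidHom.mrange ηL) →
      x ∈ AddMonoidHom.mrange ηL)
    (f : N →+ M) (g : N →+ L) (hf : IsLocalMonoidHom f) (hg : IsLocalMonoidHom g)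
    (iM : M →+ P) (iL : L →+ P) (hpo : IsMonPushout f g iM iL)
    (ηP : P →+ Pgp) (hgpP : IsGroupification ηP)
    (hqi : ∀ p : P, ηP p = 0 → p = 0) :
    (∀ x ∈ AddMonoidHom.mrange ηP, -x ∈ AddMonoidHom.mrange ηP → x = 0) ∧
    (AddMonoidHom.mrange ηP).FG ∧
    (∀ x : Pgp,
      (∃ a : ℕ, 0 < a ∧ a • x ∈ saturationOf (↑(AddMonoidHom.mrange ηP) : Set Pgp)) →
        x ∈ saturationOf (↑(AddMonoidHom.mrange ηP) : Set Pgp)) ∧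
    (∃ S : Finset Pgp,
      (↑(AddSubmonoid.closure (S : Set Pgp)) : Set Pgp) =
        saturationOf (↑(AddMonoidHom.mrange ηP) : Set Pgp)) ∧
    Set.Finite {x : Pgp | x ∈ saturationOf (↑(AddMonoidHom.mrange ηP) : Set Pgp) ∧
      -x ∈ saturationOf (↑(AddMonoidHom.mrange ηP) : Set Pgp)} :=
  stmt13_general hMsharp hMfg hLsharp hLfg f g hf hg iM iL hpo ηP hgpP hqi
end
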